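/- For every τ in the complex upper half plane, E_{3,2}(τ)⁴ − E_{3,4}(τ)² = 3888·(η(τ)η(3τ))⁶·E_{1,−3}(τ)². -/

import Mathlib

open Complex

/-- `q = exp(2πiτ)`. -/
noncomputable def qq (τ : ℂ) : ℂ := Complex.exp (2 * Real.pi * Complex.I * τ)

/-- `σ_k(n) = Σ_{d ∣ n} d^k`, as a complex number. -/
noncomputable def sigmaC (k n : ℕ) : ℂ := ∑ d ∈ n.divisors, (d : ℂ) ^ k

/-- Eisenstein series `E₂(τ) = 1 - 24 Σ_{n≥1} σ₁(n) qⁿ`. -/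
noncomputable def E₂ (τ : ℂ) : ℂ := 1 - 24 * ∑' n : ℕ, sigmaC 1 (n + 1) * qq τ ^ (n + 1)

/-- Eisenstein series `E₄(τ) = 1 + 240 Σ_{n≥1} σ₃(n) qⁿ`. -/
noncomputable def E₄ (τ : ℂ) : ℂ := 1 + 240 * ∑' n : ℕ, sigmaC 3 (n + 1) * qq τ ^ (n + 1)

/-- Eisenstein series `E₆(τ) = 1 - 504 Σ_{n≥1} σ₅(n) qⁿ`. -/
noncomputable def E₆ (τ : ℂ) : ℂ := 1 - 504 * ∑' n : ℕ, sigmaC 5 (n + 1) * qq τ ^ (n + 1)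

/-- Dedekind eta function `η(τ) = exp(πiτ/12) ∏_{n≥1} (1 - qⁿ)`. -/
noncomputable def η (τ : ℂ) : ℂ :=
  Complex.exp (Real.pi * Complex.I * τ / 12) * ∏' n : ℕ, (1 - qq τ ^ (n + 1))

/-- Theta function `θ(τ) = Σ_{n ∈ ℤ} q^{n²}`. -/
noncomputable def θ (τ : ℂ) : ℂ := ∑' n : ℤ, qq τ ^ (n ^ 2)

/-- The character `χ₋₄`: `χ₋₄(d) = 1, -1, 0` according as `d ≡ 1, 3, 0/2 (mod 4)`. -/
noncomputable def χ₄ (d : ℕ) : ℂ := if d % 4 = 1 then 1 else if d % 4 = 3 then -1 else 0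

/-- The character `χ₋₃`: `χ₋₃(d) = 1, -1, 0` according as `d ≡ 1, 2, 0 (mod 3)`. -/
noncomputable def χ₃ (d : ℕ) : ℂ := if d % 3 = 1 then 1 else if d % 3 = 2 then -1 else 0

/-- `E_{1,-4}(τ) = 1/4 + Σ_{n≥1} (Σ_{d∣n} χ₋₄(d)) qⁿ`. -/
noncomputable def E₁₄ (τ : ℂ) : ℂ :=
  1 / 4 + ∑' n : ℕ, (∑ d ∈ (n + 1).divisors, χ₄ d) * qq τ ^ (n + 1)

/-- `E_{1,-3}(τ) = 1/6 + Σ_{n≥1} (Σ_{d∣n} χ₋₃(d)) qⁿ`. -/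
noncomputable def E₁₃ (τ : ℂ) : ℂ :=
  1 / 6 + ∑' n : ℕ, (∑ d ∈ (n + 1).divisors, χ₃ d) * qq τ ^ (n + 1)

/-- `E_{2,2}(τ) = 2E₂(2τ) - E₂(τ)`. -/
noncomputable def E₂₂ (τ : ℂ) : ℂ := 2 * E₂ (2 * τ) - E₂ τ

/-- `E_{2,4}(τ) = (4E₄(2τ) - E₄(τ))/3`. -/
noncomputable def E₂₄ (τ : ℂ) : ℂ := (4 * E₄ (2 * τ) - E₄ τ) / 3

/-- `E_{3,2}(τ) = (3E₂(3τ) - E₂(τ))/2`. -/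
noncomputable def E₃₂ (τ : ℂ) : ℂ := (3 * E₂ (3 * τ) - E₂ τ) / 2

/-- `E_{3,4}(τ) = (9E₄(3τ) - E₄(τ))/8`. -/
noncomputable def E₃₄ (τ : ℂ) : ℂ := (9 * E₄ (3 * τ) - E₄ τ) / 8

/-- `E_{4,2}(τ) = (4E₂(4τ) - E₂(τ))/3`. -/
noncomputable def E₄₂ (τ : ℂ) : ℂ := (4 * E₂ (4 * τ) - E₂ τ) / 3

/-- `E'_{4,2}(τ) = 4E₂(4τ) - 4E₂(2τ) + E₂(τ)`. -/
noncomputable def E₄₂' (τ : ℂ) : ℂ := 4 * E₂ (4 * τ) - 4 * E₂ (2 * τ) + E₂ τ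

/-- `f_{1,j}(τ) = 2E₂(τ) - ((3+(-1)ʲi√3)/6)E₂(τ/2) - ((3-(-1)ʲi√3)/6)E₂((τ+1)/2)`. -/
noncomputable def f₁ (j : ℕ) (τ : ℂ) : ℂ :=
  2 * E₂ τ - ((3 + (-1 : ℂ) ^ j * Complex.I * Real.sqrt 3) / 6) * E₂ (τ / 2)
    - ((3 - (-1 : ℂ) ^ j * Complex.I * Real.sqrt 3) / 6) * E₂ ((τ + 1) / 2)

/-- `g_{1,j}(τ) = (3/2)E₂(τ) - (1/4) Σ_{0≤m≤2, m≢j (mod 3)} E₂((τ+m)/3)`. -/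
noncomputable def g₁ (j : ℕ) (τ : ℂ) : ℂ :=
  (3 / 2) * E₂ τ -
    (1 / 4) * ∑ m ∈ (Finset.range 3).filter (fun m => ¬ m % 3 = j % 3), E₂ ((τ + m) / 3)

/-- `f_{2,j}(τ) = 4E_{1,-4}(τ) + (-1)ʲ·2i·(E_{1,-4}(τ/2) - E_{1,-4}((τ+1)/2))`. -/
noncomputable def f₂ (j : ℕ) (τ : ℂ) : ℂ :=
  4 * E₁₄ τ + (-1 : ℂ) ^ j * 2 * Complex.I * (E₁₄ (τ / 2) - E₁₄ ((τ + 1) / 2))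

/-- `f_{3,j}(τ) = 6E_{1,-3}(2τ) + (-1)ʲ·i√3·(E_{1,-3}(τ/2) - E_{1,-3}((τ+1)/2))`. -/
noncomputable def f₃ (j : ℕ) (τ : ℂ) : ℂ :=
  6 * E₁₃ (2 * τ) +
    (-1 : ℂ) ^ j * Complex.I * Real.sqrt 3 * (E₁₃ (τ / 2) - E₁₃ ((τ + 1) / 2))

/-- `f_{4,j}(τ) = θ(τ/2 - (-1)ʲ/4)`. -/
noncomputable def f₄ (j : ℕ) (τ : ℂ) : ℂ := θ (τ / 2 - (-1 : ℂ) ^ j / 4)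

/-- `g_{4,j}(τ) = 2θ(2τ)² - θ((τ+j)/2)²`. -/
noncomputable def g₄ (j : ℕ) (τ : ℂ) : ℂ := 2 * θ (2 * τ) ^ 2 - θ ((τ + j) / 2) ^ 2

/-- `E_{3,-3,1}(τ) = -1/9 + Σ_{n≥1} (Σ_{d∣n} d²χ₋₃(d)) qⁿ`. -/
noncomputable def E₃₃₁ (τ : ℂ) : ℂ :=
  -(1 / 9) + ∑' n : ℕ, (∑ d ∈ (n + 1).divisors, (d : ℂ) ^ 2 * χ₃ d) * qq τ ^ (n + 1)

/-- `E_{3,1,-3}(τ) = Σ_{n≥1} (Σ_{d∣n} d²χ₋₃(n/d)) qⁿ`. -/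
noncomputable def E₃₁₃ (τ : ℂ) : ℂ :=
  ∑' n : ℕ, (∑ d ∈ (n + 1).divisors, (d : ℂ) ^ 2 * χ₃ ((n + 1) / d)) * qq τ ^ (n + 1)

section Modularity

open UpperHalfPlane hiding I
open scoped MatrixGroups Manifold

lemma norm_qq_lt_one {z : ℂ} (hz : 0 < z.im) : ‖qq z‖ < 1 :=
  norm_exp_two_pi_I_lt_one ⟨z, hz⟩

lemma norm_qq (z : ℂ) : ‖qq z‖ = Real.exp (-2 * Real.pi * z.im) := by
  rw [qq, Complex.norm_exp]
  simp

lemma qq_three_mul (z : ℂ) : qq (3 * z) = qq z ^ 3 := by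
  rw [qq, qq, ← Complex.exp_nat_mul]
  ring_nf

lemma qq_add_one (z : ℂ) : qq (z + 1) = qq z := by
  rw [qq, qq, mul_add, mul_one, Complex.exp_periodic]

lemma tsum_sigmaC_eq (k : ℕ) (q : ℂ) :
    ∑' n : ℕ, sigmaC k (n + 1) * q ^ (n + 1) =
      ∑' n : ℕ+, (ArithmeticFunction.sigma k n : ℂ) * q ^ (n : ℕ) := by
  rw [tsum_pnat_eq_tsum_succ (f := fun n ↦ (ArithmeticFunction.sigma k n : ℂ) * q ^ n)]
  simp [sigmaC, ArithmeticFunction.sigma_apply]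

lemma E₂_eq_E2 (z : ℍ) : E₂ z = EisensteinSeries.E2 z := by
  rw [E₂, tsum_sigmaC_eq, EisensteinSeries.E2, Pi.smul_apply, EisensteinSeries.G2_eq_tsum_cexp,
    riemannZeta_two, qq]
  have : (Real.pi : ℂ) ≠ 0 := by simp [Real.pi_ne_zero]
  simp only [smul_eq_mul]
  field_simp
  ring

lemma E₄_eq_modularForm (z : ℍ) : E₄ z = ModularForm.E₄ z := by
  rw [E₄, tsum_sigmaC_eq, EisensteinSeries.q_expansion_bernoulli _ ⟨2, rfl⟩, qq]
  norm_num [bernoulli_eq_bernoulli'_of_ne_one, bernoulli'_four]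

lemma η_eq_eta (z : ℂ) : η z = ModularForm.eta z := by
  rw [η, ModularForm.eta]
  congr 1
  · simp only [Function.Periodic.qParam]
    congr 1
    push_cast
    ring
  · simp only [ModularForm.eta_q_eq_pow, qq]

lemma E₂_neg_one_div {z : ℂ} (hz : 0 < z.im) :
    E₂ (-1 / z) = z ^ 2 * E₂ z - 6 * I * z / Real.pi := by
  lift z to ℍ using hz
  have h := congrFun (EisensteinSeries.E2_slash_action ModularGroup.S) z
  have hz0 : (z : ℂ) ≠ 0 := ne_zero z
  have hpi : (Real.pi : ℂ) ≠ 0 := by simp [Real.pi_ne_zero]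
  rw [ModularForm.SL_slash_apply, modular_S_smul, ModularGroup.denom_S, ← E₂_eq_E2, Pi.sub_apply,
    ← E₂_eq_E2, Pi.smul_apply, EisensteinSeries.D2_S, riemannZeta_two] at h
  simp only [smul_eq_mul, zpow_neg] at h
  rw [show -1 / (z : ℂ) = (-(z : ℂ))⁻¹ by field_simp]
  rw [zpow_ofNat] at h
  field_simp at h ⊢
  linear_combination h

lemma E₄_neg_one_div {z : ℂ} (hz : 0 < z.im) : E₄ (-1 / z) = z ^ 4 * E₄ z := by
  lift z to ℍ using hz
  have hz0 : (z : ℂ) ≠ 0 := ne_zero z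
  have h := congrFun (SlashInvariantForm.slash_action_eqn ModularForm.E₄ _
    (⟨ModularGroup.S, rfl⟩ : (ModularGroup.S : GL (Fin 2) ℝ) ∈ 𝒮ℒ)) z
  rw [← ModularForm.SL_slash, ModularForm.SL_slash_apply, modular_S_smul, ModularGroup.denom_S,
    ← E₄_eq_modularForm, ← E₄_eq_modularForm, zpow_neg, zpow_ofNat] at h
  rw [show -1 / (z : ℂ) = (-(z : ℂ))⁻¹ by field_simp]
  field_simp at h ⊢
  linear_combination h

lemma η_mul_η_neg_one_div {z : ℂ} (hz : 0 < z.im) :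
    (η (-1 / (3 * z)) * η (3 * (-1 / (3 * z)))) ^ 6 = -27 * z ^ 6 * (η z * η (3 * z)) ^ 6 := by
  have hz0 : z ≠ 0 := by rintro rfl; simp at hz
  have key {w : ℂ} (hw : 0 < w.im) : η (-1 / w) ^ 6 = (I ^ 3)⁻¹ * w ^ 3 * η w ^ 6 := by
    have h := ModularForm.eta_comp_eq_csqrt_I_inv (show w ∈ upperHalfPlaneSet from hw)
    have hs {v : ℂ} (hv : v ≠ 0) : sqrt v ^ 6 = v ^ 3 := by
      rw [sqrt_eq_exp hv, ← exp_nat_mul]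
      nth_rw 2 [← exp_log hv]
      rw [← exp_nat_mul]
      ring_nf
    have hw0 : w ≠ 0 := by rintro rfl; simp at hw
    simp only [Function.comp_apply, Pi.smul_apply, Pi.mul_apply, smul_eq_mul] at h
    rw [η_eq_eta, η_eq_eta, h, mul_pow, mul_pow, inv_pow, hs I_ne_zero, hs hw0, mul_assoc]
  rw [show 3 * (-1 / (3 * z)) = -1 / z by field_simp, mul_pow, key hz, key (by simpa using hz)]
  have hI : (I ^ 3)⁻¹ = I := by simp [I_pow_three]
  rw [hI]
  linear_combination (27 * z ^ 6 * η z ^ 6 * η (3 * z) ^ 6) * I_sq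

/-- A function of weight `8` invariant under the Fricke involution of level `3` and under
translation is compatible with `w ↦ (w - 1) / (3 w - 2)`. -/
lemma apply_div_of_fricke {F : ℂ → ℂ} (hT : ∀ z, F (z + 1) = F z)
    (hW : ∀ z : ℂ, 0 < z.im → F (-1 / (3 * z)) = 81 * z ^ 8 * F z) {w : ℂ} (hw : 0 < w.im) :
    F ((w - 1) / (3 * w - 2)) = (3 * w - 2) ^ 8 * F w := by
  have hT' (z : ℂ) : F (z - 1) = F z := by rw [← hT, sub_add_cancel]
  have ne_zero {z : ℂ} (hz : 0 < z.im) : z ≠ 0 := by rintro rfl; simp at hz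
  have im_pos {z : ℂ} (hz : 0 < z.im) : 0 < (-1 / z).im := by
    rw [neg_div, one_div, neg_im, inv_im, neg_div, neg_neg]
    exact div_pos hz (normSq_pos.2 (ne_zero hz))
  have hw1 : 0 < (w - 1).im := by simpa using hw
  have hv : 0 < (-1 / (3 * (w - 1)) - 1).im := by
    simpa using im_pos (z := 3 * (w - 1)) (by simpa using hw)
  have h1 := ne_zero hw1
  have h2 : 3 * w - 2 ≠ 0 := ne_zero (by simpa using hw)
  have hv_eq : -1 / (3 * (w - 1)) - 1 = -(3 * w - 2) / (3 * (w - 1)) := by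
    field_simp
    ring
  have hfrac : (w - 1) / (3 * w - 2) = -1 / (3 * (-1 / (3 * (w - 1)) - 1)) := by
    rw [hv_eq]
    field_simp
  rw [hfrac, hW _ hv, hT', hW _ hw1, hT', hv_eq]
  field_simp
  ring

lemma exists_norm_comp_qq_le {Φ : ℂ → ℂ} (hΦ : DifferentiableOn ℂ Φ (Metric.ball 0 1))
    (h0 : Φ 0 = 0) (h1 : deriv Φ 0 = 0) :
    ∃ C A : ℝ, 0 ≤ C ∧ ∀ z : ℂ, A ≤ z.im → ‖Φ (qq z)‖ ≤ C * ‖qq z‖ ^ 2 := by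
  have hball : Metric.ball (0 : ℂ) 1 ∈ nhds 0 := Metric.ball_mem_nhds 0 one_pos
  set Ψ := dslope (dslope Φ 0) 0
  have hΨ : DifferentiableOn ℂ Ψ (Metric.ball 0 1) :=
    (differentiableOn_dslope hball).2 ((differentiableOn_dslope hball).2 hΦ)
  have hfac (q : ℂ) : Φ q = q ^ 2 * Ψ q := by
    have e1 := sub_smul_dslope Φ 0 q
    have e2 := sub_smul_dslope (dslope Φ 0) 0 q
    rw [dslope_same, h1] at e2
    simp only [sub_zero, smul_eq_mul, h0] at e1 e2
    rw [← e1, ← e2]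
    ring
  have hcont : ContinuousAt Ψ 0 := (hΨ.differentiableAt hball).continuousAt
  obtain ⟨δ, hδ, hb⟩ := Metric.eventually_nhds_iff.1
    (hcont.norm.eventually_lt continuousAt_const (lt_add_one ‖Ψ 0‖))
  have hlim : Filter.Tendsto (fun y : ℝ ↦ Real.exp (-2 * Real.pi * y)) Filter.atTop (nhds 0) :=
    Real.tendsto_exp_atBot.comp
      (Filter.tendsto_id.const_mul_atTop_of_neg (by simp [Real.pi_pos]))
  obtain ⟨A, hA⟩ := Filter.eventually_atTop.1 (hlim.eventually (gt_mem_nhds hδ))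
  refine ⟨‖Ψ 0‖ + 1, A, by positivity, fun z hz ↦ ?_⟩
  have := hb (y := qq z) (by simpa [norm_qq] using hA _ hz)
  rw [hfac, norm_mul, norm_pow, mul_comm]
  gcongr

lemma differentiableOn_comp_qq {Φ : ℂ → ℂ} (hΦ : DifferentiableOn ℂ Φ (Metric.ball 0 1)) :
    DifferentiableOn ℂ (fun z ↦ Φ (qq z)) upperHalfPlaneSet := by
  refine hΦ.comp (Differentiable.differentiableOn ?_) fun z hz ↦ by simpa using norm_qq_lt_one hz
  unfold qq
  fun_prop

/-- The norm from level `Γ₀(3)` to level one. -/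
noncomputable def levelThreeNorm (F : ℂ → ℂ) (z : ℂ) : ℂ :=
  F z * (F (z / 3) * (F ((z + 1) / 3) * F ((z + 2) / 3)))

lemma levelThreeNorm_add_one {F : ℂ → ℂ} (hT : ∀ z, F (z + 1) = F z) (z : ℂ) :
    levelThreeNorm F (z + 1) = levelThreeNorm F z := by
  rw [levelThreeNorm, levelThreeNorm, hT, show (z + 1 + 2) / 3 = z / 3 + 1 by ring, hT,
    show z + 1 + 1 = z + 2 by ring]
  ring

lemma levelThreeNorm_neg_inv {F : ℂ → ℂ} (hT : ∀ z, F (z + 1) = F z)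
    (hW : ∀ z : ℂ, 0 < z.im → F (-1 / (3 * z)) = 81 * z ^ 8 * F z) {z : ℂ} (hz : 0 < z.im) :
    levelThreeNorm F (-z)⁻¹ = z ^ 32 * levelThreeNorm F z := by
  have hz0 : z ≠ 0 := by rintro rfl; simp at hz
  have e1 : F (-z)⁻¹ = z ^ 8 / 81 * F (z / 3) := by
    have := hW (z / 3) (by simpa using hz)
    rw [show -1 / (3 * (z / 3)) = (-z)⁻¹ by field_simp] at this
    rw [this]
    ring
  have e2 : F ((-z)⁻¹ / 3) = 81 * z ^ 8 * F z := by
    rw [← hW z hz]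
    congr 1
    field_simp
  have e3 {z : ℂ} (hz : 0 < z.im) : F (((-z)⁻¹ + 1) / 3) = z ^ 8 * F ((z + 2) / 3) := by
    have hz0 : z ≠ 0 := by rintro rfl; simp at hz
    have := apply_div_of_fricke hT hW (w := (z + 2) / 3) (by simpa using hz)
    rw [show 3 * ((z + 2) / 3) - 2 = z by ring] at this
    rw [← this]
    congr 1
    field_simp
    ring
  have e4 : F (((-z)⁻¹ + 2) / 3) = z ^ 8 * F ((z + 1) / 3) := by
    have him : 0 < (-z)⁻¹.im := im_inv_neg_coe_pos ⟨z, hz⟩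
    have := e3 him
    rw [show (-(-z)⁻¹)⁻¹ = z by simp] at this
    rw [this]
    field_simp
  rw [levelThreeNorm, e1, e2, e3 hz, e4, levelThreeNorm]
  ring

lemma norm_levelThreeNorm_le {F : ℂ → ℂ} {C A : ℝ} (hC : 0 ≤ C)
    (hF : ∀ z : ℂ, A ≤ z.im → ‖F z‖ ≤ C * ‖qq z‖ ^ 2) {z : ℂ} (hz : 0 < z.im)
    (hA : 3 * A ≤ z.im) (hA' : A ≤ z.im) :
    ‖levelThreeNorm F z‖ ≤ C ^ 4 * Real.exp (-2 * Real.pi * z.im) ^ 3 := by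
  have h3 {w : ℂ} (hw : w.im = z.im / 3) :
      ‖F w‖ ≤ C * Real.exp (-2 * Real.pi * (z.im / 3)) ^ 2 := by
    have := hF w (by linarith)
    rwa [norm_qq, hw] at this
  have h1 := hF z hA'
  rw [norm_qq] at h1
  have hexp : Real.exp (-2 * Real.pi * z.im) = Real.exp (-2 * Real.pi * (z.im / 3)) ^ 3 := by
    rw [← Real.exp_nat_mul]
    ring_nf
  set e := Real.exp (-2 * Real.pi * z.im) with he
  set r := Real.exp (-2 * Real.pi * (z.im / 3))
  have he1 : e ≤ 1 := by
    rw [he, Real.exp_le_one_iff]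
    nlinarith [Real.pi_pos]
  have he0 : 0 ≤ e := (Real.exp_pos _).le
  rw [levelThreeNorm, norm_mul, norm_mul, norm_mul]
  calc _ ≤ C * e ^ 2 * (C * r ^ 2 * (C * r ^ 2 * (C * r ^ 2))) := by
        gcongr
        · exact h3 (by simp)
        · exact h3 (by simp)
        · exact h3 (by simp)
    _ = C ^ 4 * (e ^ 3 * e) := by rw [hexp]; ring
    _ ≤ C ^ 4 * e ^ 3 := by
        gcongr
        exact mul_le_of_le_one_right (by positivity) he1

lemma discriminant_neg_inv (z : ℍ) :
    ModularForm.discriminant (ModularGroup.S • z) = z ^ 12 * ModularForm.discriminant z := by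
  have h := congrFun ModularForm.discriminant_S_invariant z
  rw [ModularForm.SL_slash_apply, ModularGroup.denom_S, zpow_neg, zpow_ofNat] at h
  have := ne_zero z
  field_simp at h
  exact h

lemma denom_T (z : ℍ) : denom ModularGroup.T z = 1 := by
  rw [ModularGroup.denom_apply]
  simp [ModularGroup.T]

lemma discriminant_T_smul (z : ℍ) :
    ModularForm.discriminant (ModularGroup.T • z) = ModularForm.discriminant z := by
  have h := congrFun ModularForm.discriminant_T_invariant z
  rwa [ModularForm.SL_slash_apply, denom_T, one_zpow, mul_one] at h

lemma mdifferentiable_of_differentiableOn {F : ℂ → ℂ} (hF : DifferentiableOn ℂ F upperHalfPlaneSet)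
    {g : ℂ → ℂ} (hg : Differentiable ℂ g) (hmaps : ∀ z : ℂ, 0 < z.im → 0 < (g z).im) :
    MDiff (fun τ : ℍ ↦ F (g τ)) := by
  rw [mdifferentiable_iff]
  refine (hF.comp hg.differentiableOn hmaps).congr fun z hz ↦ ?_
  simp [ofComplex_apply_of_im_pos hz]

/-- A weight `8` form on `Γ₀(3)` which is an eigenform of the Fricke involution and vanishes to
order two at the cusp `∞` is zero. -/
theorem comp_qq_eq_zero_of_fricke {Φ : ℂ → ℂ} (hΦ : DifferentiableOn ℂ Φ (Metric.ball 0 1))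
    (h0 : Φ 0 = 0) (h1 : deriv Φ 0 = 0)
    (hW : ∀ z : ℂ, 0 < z.im → Φ (qq (-1 / (3 * z))) = 81 * z ^ 8 * Φ (qq z))
    {z : ℂ} (hz : 0 < z.im) : Φ (qq z) = 0 := by
  set F : ℂ → ℂ := fun z ↦ Φ (qq z)
  have hT (z : ℂ) : F (z + 1) = F z := by simp only [F, qq_add_one]
  have hF : DifferentiableOn ℂ F upperHalfPlaneSet := differentiableOn_comp_qq hΦ
  obtain ⟨C, A, hC, hA⟩ := exists_norm_comp_qq_le hΦ h0 h1
  let f : Fin 4 → ℍ → ℂ :=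
    ![fun τ ↦ F τ, fun τ ↦ F (τ / 3), fun τ ↦ F ((τ + 1) / 3), fun τ ↦ F ((τ + 2) / 3)]
  have hf (i : Fin 4) : MDiff (f i) := by
    fin_cases i
    · exact mdifferentiable_of_differentiableOn hF differentiable_id (by simp)
    · exact mdifferentiable_of_differentiableOn hF (g := fun w ↦ w / 3) (by fun_prop) (by simp)
    · exact mdifferentiable_of_differentiableOn hF (g := fun w ↦ (w + 1) / 3) (by fun_prop)
        (by simp)
    · exact mdifferentiable_of_differentiableOn hF (g := fun w ↦ (w + 2) / 3) (by fun_prop)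
        (by simp)
  have hprod (τ : ℍ) : (∏ i, f i) τ = levelThreeNorm F τ := by
    simp [Fin.prod_univ_succ, f, levelThreeNorm]
  let g : ℍ → ℂ := fun τ ↦ (∏ i, f i) τ / ModularForm.discriminant τ ^ 3
  have hg (γ : SL(2, ℤ)) : SlashAction.map (-4 : ℤ) γ g = g := by
    refine SlashInvariantForm.slash_action_generators_SL2Z ?_ ?_ γ
    · ext τ
      have := ne_zero τ
      have := ModularForm.discriminant_ne_zero τ
      rw [ModularForm.SL_slash_apply, ModularGroup.denom_S]
      simp only [g, hprod, discriminant_neg_inv, neg_neg, zpow_ofNat]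
      rw [modular_S_smul, levelThreeNorm_neg_inv hT hW τ.2]
      field_simp
    · ext τ
      rw [ModularForm.SL_slash_apply, denom_T, one_zpow, mul_one]
      simp only [g, hprod, discriminant_T_smul]
      rw [modular_T_smul, coe_vadd, ofReal_one, add_comm (1 : ℂ), levelThreeNorm_add_one hT]
  let G : ModularForm 𝒮ℒ (-4) :=
    { toFun := g
      slash_action_eq' := fun _ ⟨γ, hγ⟩ ↦ hγ ▸ hg γ
      holo' := by
        refine (MDifferentiable.prod fun i _ ↦ hf i).div
          (CuspForm.discriminant.holo'.pow 3) fun τ ↦ ?_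
        exact pow_ne_zero 3 (ModularForm.discriminant_ne_zero τ)
      bdd_at_cusps' := by
        intro c hc
        rw [Subgroup.IsArithmetic.isCusp_iff_isCusp_SL2Z] at hc
        rw [OnePoint.isBoundedAt_iff_forall_SL2Z hc]
        intro γ _
        rw [hg γ]
        obtain ⟨K, hK⟩ := ModularForm.exp_isBigO_discriminant.bound
        obtain ⟨B, hB⟩ := atImInfty_mem _ |>.1 hK
        rw [isBoundedAtImInfty_iff]
        refine ⟨C ^ 4 * K ^ 3, max B (max A (3 * A)), fun τ hτ ↦ ?_⟩
        simp only [max_le_iff] at hτ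
        have hΔ := hB τ hτ.1
        simp only [Set.mem_ofPred_eq, Real.norm_eq_abs, Real.abs_exp] at hΔ
        have hpos : 0 < ‖ModularForm.discriminant τ‖ :=
          norm_pos_iff.2 (ModularForm.discriminant_ne_zero τ)
        simp only [g, hprod, norm_div, norm_pow]
        rw [div_le_iff₀ (by positivity), mul_assoc, ← mul_pow]
        refine (norm_levelThreeNorm_le hC hA τ.2 hτ.2.2 hτ.2.1).trans ?_
        gcongr
        exact hΔ }
  have hG : ⇑G = 0 := ModularFormClass.levelOne_neg_weight_eq_zero (by norm_num) G
  have hzero : ∏ i, f i = 0 := by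
    ext τ
    have := congrFun hG τ
    exact (div_eq_zero_iff.1 this).resolve_right
      (pow_ne_zero 3 (ModularForm.discriminant_ne_zero τ))
  obtain ⟨i, -, hi⟩ := (prod_eq_zero_iff fun i _ ↦ hf i).1 hzero
  fin_cases i
  · exact congrFun hi ⟨z, hz⟩
  · simpa [f] using congrFun hi ⟨3 * z, by simpa using hz⟩
  · simpa [f] using congrFun hi ⟨3 * z - 1, by simpa using hz⟩
  · simpa [f] using congrFun hi ⟨3 * z - 2, by simpa using hz⟩

/-- The power series `∑ σₖ(n + 1) qⁿ`. -/
noncomputable def sigmaSeries (k : ℕ) (q : ℂ) : ℂ := ∑' n : ℕ, sigmaC k (n + 1) * q ^ n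

lemma sigmaSeries_zero (k : ℕ) : sigmaSeries k 0 = 1 := by
  rw [sigmaSeries, tsum_eq_single 0 (by intro n hn; simp [hn])]
  simp [sigmaC]

lemma tsum_sigmaC_eq_mul_sigmaSeries (k : ℕ) (q : ℂ) :
    ∑' n : ℕ, sigmaC k (n + 1) * q ^ (n + 1) = q * sigmaSeries k q := by
  rw [sigmaSeries, ← tsum_mul_left]
  congr! 2
  ring

lemma norm_sigmaC_le (k n : ℕ) : ‖sigmaC k n‖ ≤ (n : ℝ) ^ (k + 1) := by
  rw [sigmaC]
  refine (norm_sum_le _ _).trans ?_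
  have := ArithmeticFunction.sigma_le_pow_succ k n
  rw [ArithmeticFunction.sigma_apply] at this
  simp only [norm_pow, norm_natCast]
  exact_mod_cast this

lemma differentiableOn_sigmaSeries (k : ℕ) :
    DifferentiableOn ℂ (sigmaSeries k) (Metric.ball 0 1) := by
  intro q hq
  rw [mem_ball_zero_iff] at hq
  obtain ⟨r, hqr, hr⟩ := exists_between hq
  have hr0 : 0 ≤ r := (norm_nonneg q).trans hqr.le
  have hsum : Summable fun n : ℕ ↦ ((n + 1 : ℕ) : ℝ) ^ (k + 1) * r ^ n := by
    rcases hr0.eq_or_lt with rfl | hpos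
    · exact absurd hqr (by simp)
    have := (summable_nat_add_iff 1).2
      (summable_pow_mul_geometric_of_norm_lt_one (k + 1) (r := r)
        (by rwa [Real.norm_of_nonneg hr0]))
    refine (this.mul_left r⁻¹).congr fun n ↦ ?_
    rw [pow_succ r]
    field_simp
  have hdiff : DifferentiableOn ℂ (sigmaSeries k) (Metric.ball 0 r) := by
    refine differentiableOn_tsum_of_summable_norm hsum (fun n ↦ by fun_prop) Metric.isOpen_ball
      fun n w hw ↦ ?_
    rw [mem_ball_zero_iff] at hw
    rw [norm_mul, norm_pow]
    gcongr
    exact norm_sigmaC_le k (n + 1)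
  exact (hdiff.differentiableAt
    (Metric.isOpen_ball.mem_nhds (by simpa using hqr))).differentiableWithinAt

/-- The `q`-expansion of `E₃₂`. -/
noncomputable def levelThreeX (q : ℂ) : ℂ :=
  1 + 12 * (q * sigmaSeries 1 q) - 36 * (q ^ 3 * sigmaSeries 1 (q ^ 3))

/-- The `q`-expansion of `E₃₄`. -/
noncomputable def levelThreeY (q : ℂ) : ℂ :=
  1 - 30 * (q * sigmaSeries 3 q) + 270 * (q ^ 3 * sigmaSeries 3 (q ^ 3))

/-- The `q`-expansion of `(η(τ) η(3τ))⁶ / q`. -/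
noncomputable def levelThreeP (q : ℂ) : ℂ :=
  ((∏' n : ℕ, (1 - q ^ (n + 1))) * ∏' n : ℕ, (1 - (q ^ 3) ^ (n + 1))) ^ 6

lemma E₃₂_eq_levelThreeX (z : ℂ) : E₃₂ z = levelThreeX (qq z) := by
  rw [E₃₂, E₂, E₂, levelThreeX, tsum_sigmaC_eq_mul_sigmaSeries, tsum_sigmaC_eq_mul_sigmaSeries,
    qq_three_mul]
  ring

lemma E₃₄_eq_levelThreeY (z : ℂ) : E₃₄ z = levelThreeY (qq z) := by
  rw [E₃₄, E₄, E₄, levelThreeY, tsum_sigmaC_eq_mul_sigmaSeries, tsum_sigmaC_eq_mul_sigmaSeries,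
    qq_three_mul]
  ring

lemma η_mul_η_pow_six (z : ℂ) : (η z * η (3 * z)) ^ 6 = qq z * levelThreeP (qq z) := by
  have h : (Complex.exp (Real.pi * I * z / 12) * Complex.exp (Real.pi * I * (3 * z) / 12)) ^ 6 =
      qq z := by
    rw [← Complex.exp_add, ← Complex.exp_nat_mul, qq]
    push_cast
    ring_nf
  rw [η, η, levelThreeP, qq_three_mul, mul_mul_mul_comm, mul_pow, h]

lemma mapsTo_pow_three_ball :
    Set.MapsTo (fun q : ℂ ↦ q ^ 3) (Metric.ball 0 1) (Metric.ball 0 1) := by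
  intro q hq
  rw [mem_ball_zero_iff] at hq ⊢
  rw [norm_pow]
  exact pow_lt_one₀ (norm_nonneg q) hq three_ne_zero

lemma differentiableOn_levelThreeX : DifferentiableOn ℂ levelThreeX (Metric.ball 0 1) := by
  have h := differentiableOn_sigmaSeries 1
  have h3 : DifferentiableOn ℂ (fun q ↦ sigmaSeries 1 (q ^ 3)) (Metric.ball 0 1) :=
    h.comp (by fun_prop) mapsTo_pow_three_ball
  unfold levelThreeX
  fun_prop

lemma differentiableOn_levelThreeY : DifferentiableOn ℂ levelThreeY (Metric.ball 0 1) := by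
  have h := differentiableOn_sigmaSeries 3
  have h3 : DifferentiableOn ℂ (fun q ↦ sigmaSeries 3 (q ^ 3)) (Metric.ball 0 1) :=
    h.comp (by fun_prop) mapsTo_pow_three_ball
  unfold levelThreeY
  fun_prop

lemma differentiableOn_levelThreeP : DifferentiableOn ℂ levelThreeP (Metric.ball 0 1) := by
  have h := ModularForm.differentiableOn_tprod_one_sub_pow
  have h3 : DifferentiableOn ℂ (fun q : ℂ ↦ ∏' n : ℕ, (1 - (q ^ 3) ^ (n + 1))) (Metric.ball 0 1) :=
    h.comp (g := fun q : ℂ ↦ ∏' n : ℕ, (1 - q ^ (n + 1))) (by fun_prop) mapsTo_pow_three_ball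
  exact (h.mul h3).pow 6

lemma hasDerivAt_mul_sigmaSeries (k : ℕ) : HasDerivAt (fun q ↦ q * sigmaSeries k q) 1 0 := by
  have h := ((differentiableOn_sigmaSeries k).differentiableAt
    (Metric.ball_mem_nhds 0 one_pos)).hasDerivAt
  exact ((hasDerivAt_id (0 : ℂ)).mul h).congr_deriv (by simp [sigmaSeries_zero])

lemma hasDerivAt_pow_three_mul_sigmaSeries (k : ℕ) :
    HasDerivAt (fun q ↦ q ^ 3 * sigmaSeries k (q ^ 3)) 0 0 := by
  have h : HasDerivAt (fun q ↦ q * sigmaSeries k q) 1 ((0 : ℂ) ^ 3) := by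
    simpa using hasDerivAt_mul_sigmaSeries k
  have hcomp := h.comp 0 (hasDerivAt_pow 3 (0 : ℂ))
  rw [Function.comp_def] at hcomp
  exact hcomp.congr_deriv (by simp)

lemma E₃₂_fricke {z : ℂ} (hz : 0 < z.im) : E₃₂ (-1 / (3 * z)) = -3 * z ^ 2 * E₃₂ z := by
  have hz0 : z ≠ 0 := by rintro rfl; simp at hz
  rw [E₃₂, E₃₂, show 3 * (-1 / (3 * z)) = -1 / z by field_simp, E₂_neg_one_div hz,
    E₂_neg_one_div (by simpa using hz)]
  ring

lemma E₃₄_fricke {z : ℂ} (hz : 0 < z.im) : E₃₄ (-1 / (3 * z)) = -9 * z ^ 4 * E₃₄ z := by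
  have hz0 : z ≠ 0 := by rintro rfl; simp at hz
  rw [E₃₄, E₃₄, show 3 * (-1 / (3 * z)) = -1 / z by field_simp, E₄_neg_one_div hz,
    E₄_neg_one_div (by simpa using hz)]
  ring

theorem E₃₂_pow_four_sub_E₃₄_sq {z : ℂ} (hz : 0 < z.im) :
    E₃₂ z ^ 4 - E₃₄ z ^ 2 = 108 * (η z * η (3 * z)) ^ 6 * E₃₂ z := by
  set Φ : ℂ → ℂ := fun q ↦
    levelThreeX q ^ 4 - levelThreeY q ^ 2 - 108 * (q * levelThreeP q) * levelThreeX q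
  have hΦ_qq (z : ℂ) : Φ (qq z) =
      E₃₂ z ^ 4 - E₃₄ z ^ 2 - 108 * (η z * η (3 * z)) ^ 6 * E₃₂ z := by
    simp only [Φ, E₃₂_eq_levelThreeX, E₃₄_eq_levelThreeY, η_mul_η_pow_six]
  have hX0 : levelThreeX 0 = 1 := by simp [levelThreeX]
  have hY0 : levelThreeY 0 = 1 := by simp [levelThreeY]
  have hP0 : levelThreeP 0 = 1 := by simp [levelThreeP]
  have hX : HasDerivAt levelThreeX 12 0 :=
    ((((hasDerivAt_mul_sigmaSeries 1).const_mul 12).const_add 1).sub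
      ((hasDerivAt_pow_three_mul_sigmaSeries 1).const_mul 36)).congr_deriv (by simp)
  have hY : HasDerivAt levelThreeY (-30) 0 :=
    ((((hasDerivAt_mul_sigmaSeries 3).const_mul 30).const_sub 1).add
      ((hasDerivAt_pow_three_mul_sigmaSeries 3).const_mul 270)).congr_deriv (by simp)
  have hP := (differentiableOn_levelThreeP.differentiableAt
    (Metric.ball_mem_nhds 0 one_pos)).hasDerivAt
  have hΦ : HasDerivAt Φ 0 0 := by
    refine (((hX.pow 4).sub (hY.pow 2)).sub
      ((((hasDerivAt_id (0 : ℂ)).mul hP).const_mul 108).mul hX)).congr_deriv ?_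
    simp [hX0, hY0, hP0]
    norm_num
  have hdiff : DifferentiableOn ℂ Φ (Metric.ball 0 1) := by
    have := differentiableOn_levelThreeX
    have := differentiableOn_levelThreeY
    have := differentiableOn_levelThreeP
    fun_prop
  have := comp_qq_eq_zero_of_fricke hdiff (by simp [Φ, hX0, hY0]) hΦ.deriv (fun w hw ↦ ?_) hz
  · rw [hΦ_qq] at this
    exact sub_eq_zero.1 this
  · rw [hΦ_qq, hΦ_qq, E₃₂_fricke hw, E₃₄_fricke hw, η_mul_η_neg_one_div hw]
    ring

end Modularity

section Lambert

/-- The Lambert term `q ^ (n + 1) / (1 - q ^ (n + 1))`. -/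
noncomputable def lambert (q : ℂ) (n : ℕ) : ℂ := q ^ (n + 1) / (1 - q ^ (n + 1))

/-- The indicator of the multiples of three. -/
noncomputable def threeDvd (n : ℕ) : ℂ := if 3 ∣ n then 1 else 0

lemma norm_threeDvd_le (n : ℕ) : ‖threeDvd n‖ ≤ 1 := by
  unfold threeDvd
  split_ifs <;> simp

lemma norm_χ₃_le (n : ℕ) : ‖χ₃ n‖ ≤ 1 := by
  unfold χ₃
  split_ifs <;> simp

variable {q : ℂ}

lemma norm_pow_succ_lt_one (hq : ‖q‖ < 1) (n : ℕ) : ‖q ^ (n + 1)‖ < 1 := by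
  rw [norm_pow]
  exact pow_lt_one₀ (norm_nonneg q) hq n.succ_ne_zero

lemma one_sub_pow_succ_ne_zero (hq : ‖q‖ < 1) (n : ℕ) : 1 - q ^ (n + 1) ≠ 0 := by
  intro h
  have := norm_pow_succ_lt_one hq n
  rw [← sub_eq_zero.1 h, norm_one] at this
  exact lt_irrefl _ this

lemma lambert_mul_lambert (hq : ‖q‖ < 1) (m n : ℕ) :
    lambert q m * lambert q n = lambert q (m + n + 1) * (1 + lambert q m + lambert q n) := by
  have hm := one_sub_pow_succ_ne_zero hq m
  have hn := one_sub_pow_succ_ne_zero hq n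
  have hmn := one_sub_pow_succ_ne_zero hq (m + n + 1)
  have hpow : q ^ (m + n + 1 + 1) = q ^ (m + 1) * q ^ (n + 1) := by ring
  unfold lambert
  rw [hpow] at hmn ⊢
  generalize q ^ (m + 1) = a at hm hmn ⊢
  generalize q ^ (n + 1) = b at hn hmn ⊢
  field_simp
  ring

lemma norm_lambert_le (hq : ‖q‖ < 1) (n : ℕ) : ‖lambert q n‖ ≤ (1 - ‖q‖)⁻¹ * ‖q‖ ^ (n + 1) := by
  have h1 : 0 < 1 - ‖q‖ := sub_pos.2 hq
  have h2 : 1 - ‖q‖ ≤ ‖1 - q ^ (n + 1)‖ := by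
    have h3 := norm_sub_norm_le (1 : ℂ) (q ^ (n + 1))
    have h4 : ‖q‖ ^ (n + 1) ≤ ‖q‖ := pow_le_of_le_one (norm_nonneg q) hq.le n.succ_ne_zero
    rw [norm_one, norm_pow] at h3
    linarith
  rw [lambert, norm_div, norm_pow, div_eq_inv_mul]
  gcongr

lemma summable_norm_lambert (hq : ‖q‖ < 1) : Summable fun n ↦ ‖lambert q n‖ :=
  .of_nonneg_of_le (fun _ ↦ norm_nonneg _) (norm_lambert_le hq)
    (((summable_nat_add_iff 1).2 (summable_geometric_of_norm_lt_one (x := ‖q‖)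
      (by simpa using hq))).mul_left _)

lemma summable_lambert (hq : ‖q‖ < 1) : Summable (lambert q) := (summable_norm_lambert hq).of_norm

lemma summable_mul_lambert (hq : ‖q‖ < 1) {c : ℕ → ℂ} (hc : ∀ n, ‖c n‖ ≤ n + 1) :
    Summable fun n ↦ c n * lambert q n := by
  have h : Summable fun n : ℕ ↦ (n : ℝ) ^ 1 * ‖q‖ ^ n :=
    summable_pow_mul_geometric_of_norm_lt_one 1 (by simpa using hq)
  refine .of_norm_bounded (((summable_nat_add_iff 1).2 h).mul_left (1 - ‖q‖)⁻¹) fun n ↦ ?_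
  rw [norm_mul]
  calc _ ≤ (n + 1 : ℝ) * ((1 - ‖q‖)⁻¹ * ‖q‖ ^ (n + 1)) :=
        mul_le_mul (hc n) (norm_lambert_le hq n) (norm_nonneg _) (by positivity)
    _ = _ := by push_cast; ring

lemma summable_bounded_mul_lambert (hq : ‖q‖ < 1) {c : ℕ → ℂ} (hc : ∀ n, ‖c n‖ ≤ 1) :
    Summable fun n ↦ c n * lambert q n :=
  summable_mul_lambert hq fun n ↦ (hc n).trans (by simp)

lemma summable_mul_lambert_sq (hq : ‖q‖ < 1) {c : ℕ → ℂ} (hc : ∀ n, ‖c n‖ ≤ 1) :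
    Summable fun n ↦ c n * lambert q n ^ 2 := by
  have h := summable_norm_lambert hq
  refine .of_norm_bounded_eventually_nat h ?_
  filter_upwards [h.tendsto_atTop_zero.eventually (gt_mem_nhds one_pos)] with n hn
  rw [norm_mul, norm_pow, pow_two, ← mul_assoc]
  exact mul_le_of_le_one_left (norm_nonneg _) (mul_le_one₀ (hc n) (norm_nonneg _) hn.le)

lemma χ₃_mul_χ₃ (m n : ℕ) :
    χ₃ m * χ₃ n = threeDvd (m + 2 * n) - threeDvd (m + n) := by
  unfold χ₃ threeDvd
  rcases (by omega : m % 3 = 0 ∨ m % 3 = 1 ∨ m % 3 = 2) with hm | hm | hm <;>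
  rcases (by omega : n % 3 = 0 ∨ n % 3 = 1 ∨ n % 3 = 2) with hn | hn | hn <;>
  simp [hm, hn, Nat.dvd_iff_mod_eq_zero, Nat.add_mod, Nat.mul_mod]

lemma hasSum_sum_antidiagonal {f : ℕ × ℕ → ℂ} (hf : Summable f) :
    HasSum (fun N ↦ ∑ p ∈ Finset.HasAntidiagonal.antidiagonal N, f p) (∑' p, f p) := by
  have h : HasSum (f ∘ Finset.HasAntidiagonal.sigmaAntidiagonalEquivProd) (∑' p, f p) :=
    (Equiv.hasSum_iff _).2 hf.hasSum
  refine h.sigma fun N ↦ ?_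
  rw [← Finset.sum_coe_sort]
  exact hasSum_fintype _

lemma tsum_eq_diagonal_add_two_mul {f : ℕ × ℕ → ℂ} (hf : Summable f)
    (hsymm : ∀ m n, f (m, n) = f (n, m)) :
    ∑' p, f p = ∑' n, f (n, n) + 2 * ∑' p : ℕ × ℕ, f (p.2, p.2 + p.1 + 1) := by
  have hlt : ∑' p, {p : ℕ × ℕ | p.1 < p.2}.indicator f p =
      ∑' p : ℕ × ℕ, f (p.2, p.2 + p.1 + 1) := by
    have hinj : Function.Injective fun p : ℕ × ℕ ↦ (p.2, p.2 + p.1 + 1) := by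
      rintro ⟨a, b⟩ ⟨c, d⟩ h
      simp only [Prod.mk.injEq] at h ⊢
      omega
    rw [← hinj.tsum_eq]
    · refine tsum_congr fun p ↦ Set.indicator_of_mem ?_ f
      change p.2 < p.2 + p.1 + 1
      omega
    · refine Set.support_indicator_subset.trans ?_
      rintro ⟨m, n⟩ (h : m < n)
      exact ⟨(n - m - 1, m), by simp; omega⟩
  have hgt : ∑' p, {p : ℕ × ℕ | p.2 < p.1}.indicator f p =
      ∑' p, {p : ℕ × ℕ | p.1 < p.2}.indicator f p := by
    rw [← (Equiv.prodComm ℕ ℕ).tsum_eq]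
    refine tsum_congr fun ⟨m, n⟩ ↦ ?_
    by_cases h : m < n <;> simp [h, hsymm m n]
  have heq : ∑' p, {p : ℕ × ℕ | p.1 = p.2}.indicator f p = ∑' n, f (n, n) := by
    have hinj : Function.Injective fun n : ℕ ↦ (n, n) := fun a b h ↦ (Prod.mk.inj h).1
    rw [← hinj.tsum_eq]
    · exact tsum_congr fun n ↦ Set.indicator_of_mem (by rfl) f
    · refine Set.support_indicator_subset.trans ?_
      rintro ⟨m, n⟩ (rfl : m = n)
      exact ⟨m, rfl⟩
  rw [← hlt, two_mul]
  nth_rw 2 [← hgt]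
  rw [← heq, ← (hf.indicator _).tsum_add (hf.indicator _),
    ← (hf.indicator _).tsum_add ((hf.indicator _).add (hf.indicator _))]
  refine tsum_congr fun ⟨m, n⟩ ↦ ?_
  rcases lt_trichotomy m n with h | rfl | h
  · simp [h, h.ne, h.not_gt]
  · simp
  · simp [h, h.ne', h.not_gt]

lemma sum_antidiagonal_lambert_mul (hq : ‖q‖ < 1) (N : ℕ) :
    ∑ p ∈ Finset.HasAntidiagonal.antidiagonal N, lambert q p.1 * lambert q p.2 =
      lambert q (N + 1) * (N + 1 + 2 * ∑ m ∈ Finset.range (N + 1), lambert q m) := by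
  have hcongr : ∀ p ∈ Finset.HasAntidiagonal.antidiagonal N, lambert q p.1 * lambert q p.2 =
      lambert q (N + 1) * (1 + lambert q p.1 + lambert q p.2) := by
    intro p hp
    rw [lambert_mul_lambert hq, Finset.HasAntidiagonal.mem_antidiagonal.1 hp]
  rw [Finset.sum_congr rfl hcongr, ← Finset.mul_sum, Finset.sum_add_distrib, Finset.sum_add_distrib,
    Finset.Nat.sum_antidiagonal_eq_sum_range_succ_mk,
    Finset.Nat.sum_antidiagonal_eq_sum_range_succ_mk,
    ← Finset.Nat.sum_antidiagonal_swap,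
    Finset.Nat.sum_antidiagonal_eq_sum_range_succ_mk]
  simp only [Finset.sum_const, Prod.snd_swap, Finset.card_range, Nat.succ_eq_add_one, nsmul_eq_mul]
  push_cast
  ring

lemma summable_mul_lambert_mul_lambert (hq : ‖q‖ < 1) {c : ℕ × ℕ → ℂ} (hc : ∀ p, ‖c p‖ ≤ 1) :
    Summable fun p : ℕ × ℕ ↦ c p * (lambert q p.1 * lambert q p.2) := by
  refine .of_norm_bounded (g := fun p : ℕ × ℕ ↦ ‖lambert q p.1 * lambert q p.2‖) ?_ fun p ↦ ?_
  · exact (summable_mul_of_summable_norm (summable_norm_lambert hq) (summable_norm_lambert hq)).norm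
  · rw [norm_mul]
    exact mul_le_of_le_one_left (norm_nonneg _) (hc p)

lemma hasSum_threeDvd_add_mul_lambert (hq : ‖q‖ < 1) :
    HasSum (fun d : ℕ ↦
      threeDvd (d + 1) * (lambert q d * (d + 2 * ∑ m ∈ Finset.range d, lambert q m)))
      (∑' p : ℕ × ℕ, threeDvd (p.1 + 1 + (p.2 + 1)) * (lambert q p.1 * lambert q p.2)) := by
  have h := hasSum_sum_antidiagonal (summable_mul_lambert_mul_lambert hq
    (c := fun p ↦ threeDvd (p.1 + 1 + (p.2 + 1))) fun p ↦ norm_threeDvd_le _)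
  rw [← hasSum_nat_add_iff' 1, Finset.sum_range_one, Nat.cast_zero, Finset.sum_range_zero, mul_zero,
    add_zero, mul_zero, mul_zero, sub_zero]
  refine h.congr_fun fun N ↦ ?_
  rw [Nat.cast_add_one, ← sum_antidiagonal_lambert_mul hq, Finset.mul_sum]
  refine Finset.sum_congr rfl fun p hp ↦ ?_
  rw [← Finset.HasAntidiagonal.mem_antidiagonal.1 hp]
  ring_nf

lemma hasSum_lambert_mul_lambert_add (hq : ‖q‖ < 1) (d : ℕ) :
    HasSum (fun n ↦ lambert q n * lambert q (n + d + 1))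
      (lambert q d * ∑ m ∈ Finset.range (d + 1), lambert q m -
        ∑' n, lambert q (n + d + 1)) := by
  have h := summable_lambert hq
  have h' : Summable fun n ↦ lambert q (n + d + 1) := (summable_nat_add_iff (d + 1)).2 h
  have hfin : ∑ m ∈ Finset.range (d + 1), lambert q m =
      ∑' n, lambert q n - ∑' n, lambert q (n + d + 1) :=
    eq_sub_of_add_eq (h.sum_add_tsum_nat_add (d + 1))
  rw [hfin]
  refine (((h.hasSum.sub h'.hasSum).mul_left (lambert q d)).sub h'.hasSum).congr_fun fun n ↦ ?_
  have := lambert_mul_lambert hq n d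
  linear_combination -this

lemma sum_range_threeDvd (N : ℕ) : ∑ d ∈ Finset.range N, threeDvd (d + 1) = (N / 3 : ℕ) := by
  induction N with
  | zero => simp
  | succ N ih =>
    rw [Finset.sum_range_succ, ih, Nat.succ_div, threeDvd]
    split_ifs <;> simp

lemma hasSum_threeDvd_mul_tail (hq : ‖q‖ < 1) :
    HasSum (fun d ↦ threeDvd (d + 1) * ∑' n, lambert q (n + d + 1))
      (∑' n : ℕ, (n / 3 : ℕ) * lambert q n) := by
  have hgeom := summable_geometric_of_norm_lt_one (x := ‖q‖) (by simpa using hq)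
  have hsum : Summable fun p : ℕ × ℕ ↦ threeDvd (p.1 + 1) * lambert q (p.2 + p.1 + 1) := by
    refine .of_norm_bounded (g := fun p : ℕ × ℕ ↦ (1 - ‖q‖)⁻¹ * ‖q‖ ^ 2 * (‖q‖ ^ p.1 * ‖q‖ ^ p.2))
      (.mul_left _ (summable_mul_of_summable_norm hgeom.norm hgeom.norm)) fun p ↦ ?_
    rw [norm_mul]
    refine (mul_le_of_le_one_left (norm_nonneg _) (norm_threeDvd_le _)).trans
      ((norm_lambert_le hq _).trans_eq ?_)
    ring
  have hanti := hasSum_sum_antidiagonal hsum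
  have hcount : HasSum (fun n : ℕ ↦ ((n / 3 : ℕ) : ℂ) * lambert q n)
      (∑' p : ℕ × ℕ, threeDvd (p.1 + 1) * lambert q (p.2 + p.1 + 1)) := by
    rw [← hasSum_nat_add_iff' 1, Finset.sum_range_one, Nat.zero_div, Nat.cast_zero, zero_mul,
      sub_zero]
    refine hanti.congr_fun fun N ↦ ?_
    rw [← sum_range_threeDvd, Finset.Nat.sum_antidiagonal_eq_sum_range_succ_mk, Finset.sum_mul]
    refine Finset.sum_congr rfl fun d hd ↦ ?_
    rw [Nat.sub_add_cancel (Finset.mem_range_succ_iff.1 hd)]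
  rw [hcount.tsum_eq]
  have hfiber (d : ℕ) : HasSum (fun n ↦ threeDvd (d + 1) * lambert q (n + d + 1))
      (threeDvd (d + 1) * ∑' n, lambert q (n + d + 1)) := by
    have : Summable fun n ↦ lambert q (n + d + 1) :=
      (summable_nat_add_iff (d + 1)).2 (summable_lambert hq)
    exact this.hasSum.mul_left _
  exact hsum.hasSum.prod_fiberwise hfiber

lemma sq_tsum_χ₃_mul_lambert (hq : ‖q‖ < 1) :
    (∑' n, χ₃ (n + 1) * lambert q n) ^ 2 =
      ∑' n, lambert q n ^ 2 + ∑' n : ℕ, (threeDvd (n + 1) *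
        (2 * lambert q n ^ 2 - n * lambert q n)) - 2 * ∑' n : ℕ, (n / 3 : ℕ) * lambert q n := by
  have hχ : Summable fun n ↦ ‖χ₃ (n + 1) * lambert q n‖ :=
    (summable_bounded_mul_lambert hq fun n ↦ norm_χ₃_le (n + 1)).norm
  have hB := summable_mul_lambert_mul_lambert hq
    (c := fun p ↦ threeDvd (p.1 + 1 + 2 * (p.2 + 1))) fun p ↦ norm_threeDvd_le _
  have hA := summable_mul_lambert_mul_lambert hq
    (c := fun p ↦ threeDvd (p.1 + 1 + (p.2 + 1))) fun p ↦ norm_threeDvd_le _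
  have hsplit : (∑' n, χ₃ (n + 1) * lambert q n) ^ 2 =
      ∑' p : ℕ × ℕ, threeDvd (p.1 + 1 + 2 * (p.2 + 1)) * (lambert q p.1 * lambert q p.2) -
      ∑' p : ℕ × ℕ, threeDvd (p.1 + 1 + (p.2 + 1)) * (lambert q p.1 * lambert q p.2) := by
    rw [pow_two, tsum_mul_tsum_of_summable_norm hχ hχ, ← hB.tsum_sub hA]
    refine tsum_congr fun p ↦ ?_
    rw [← sub_mul, ← χ₃_mul_χ₃]
    ring
  have hoff (p : ℕ × ℕ) : threeDvd (p.2 + 1 + 2 * (p.2 + p.1 + 1 + 1)) = threeDvd (p.1 + 1) := by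
    unfold threeDvd
    congr 1
    simp only [eq_iff_iff]
    omega
  have hdiag := tsum_eq_diagonal_add_two_mul hB fun m n ↦ by
    rw [mul_comm (lambert q m)]
    congr 1
    unfold threeDvd
    congr 1
    simp only [eq_iff_iff]
    omega
  have hS : Summable fun p : ℕ × ℕ ↦
      threeDvd (p.1 + 1) * (lambert q p.2 * lambert q (p.2 + p.1 + 1)) := by
    have hinj : Function.Injective fun p : ℕ × ℕ ↦ (p.2, p.2 + p.1 + 1) := by
      rintro ⟨a, b⟩ ⟨c, d⟩ h
      simp only [Prod.mk.injEq] at h ⊢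
      omega
    simpa only [Function.comp_def, hoff] using hB.comp_injective hinj
  have hfiber (d : ℕ) : HasSum
      (fun n ↦ threeDvd (d + 1) * (lambert q n * lambert q (n + d + 1)))
      (threeDvd (d + 1) * (lambert q d * ∑ m ∈ Finset.range (d + 1), lambert q m -
        ∑' n, lambert q (n + d + 1))) :=
    (hasSum_lambert_mul_lambert_add hq d).mul_left _
  have hS' := hS.hasSum.prod_fiberwise hfiber
  have htail := hasSum_threeDvd_mul_tail hq
  have hA' := hasSum_threeDvd_add_mul_lambert hq
  have hone (n : ℕ) : threeDvd (n + 1 + 2 * (n + 1)) = 1 := if_pos ⟨n + 1, by ring⟩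
  have hsum := ((hS'.mul_left 2).sub hA').add (htail.mul_left 2)
  have hD := hsum.congr_fun
    (g := fun n : ℕ ↦ threeDvd (n + 1) * (2 * lambert q n ^ 2 - n * lambert q n)) fun n ↦ by
      rw [Finset.sum_range_succ]
      ring
  rw [hsplit, hdiag, hD.tsum_eq]
  simp only [hoff, hone, one_mul, ← pow_two]
  ring

lemma tsum_succ_mul_lambert (hq : ‖q‖ < 1) :
    ∑' n : ℕ, (n + 1 : ℂ) * lambert q n = ∑' n : ℕ, sigmaC 1 (n + 1) * q ^ (n + 1) := by
  rw [tsum_sigmaC_eq, ← tsum_pow_div_one_sub_eq_tsum_sigma hq,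
    tsum_pnat_eq_tsum_succ (f := fun n ↦ (n : ℂ) ^ 1 * q ^ n / (1 - q ^ n))]
  refine tsum_congr fun n ↦ ?_
  rw [lambert, pow_one, Nat.cast_add_one, mul_div_assoc]

lemma tsum_lambert_add_sq (hq : ‖q‖ < 1) :
    ∑' n : ℕ, (lambert q n + lambert q n ^ 2) = ∑' n : ℕ, sigmaC 1 (n + 1) * q ^ (n + 1) := by
  rw [tsum_sigmaC_eq, ← tsum_prod_pow_eq_tsum_sigma 1 hq,
    tsum_pnat_eq_tsum_succ (f := fun d ↦ ∑' c : ℕ+, (c : ℂ) ^ 1 * q ^ (d * c : ℕ))]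
  refine tsum_congr fun n ↦ ?_
  have h := tsum_coe_mul_geometric_of_norm_lt_one (norm_pow_succ_lt_one hq n)
  rw [tsum_pnat_eq_tsum_of_eq_zero (f := fun c ↦ (c : ℂ) ^ 1 * q ^ ((n + 1) * c)) (by simp)]
  simp only [pow_one, pow_mul]
  rw [h, lambert]
  have := one_sub_pow_succ_ne_zero hq n
  field_simp
  ring

lemma tsum_sum_divisors_χ₃ (hq : ‖q‖ < 1) :
    ∑' n : ℕ, (∑ d ∈ (n + 1).divisors, χ₃ d) * q ^ (n + 1) = ∑' n, χ₃ (n + 1) * lambert q n := by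
  have hsum : Summable fun c : ℕ+ × ℕ+ ↦ χ₃ c.1 * q ^ (c.1 * c.2 : ℕ) := by
    refine .of_norm_bounded (summable_prod_mul_pow 0 hq).norm fun c ↦ ?_
    rw [norm_mul, pow_zero, one_mul]
    exact mul_le_of_le_one_left (norm_nonneg _) (norm_χ₃_le _)
  have hrhs : ∑' n, χ₃ (n + 1) * lambert q n = ∑' c : ℕ+ × ℕ+, χ₃ c.1 * q ^ (c.1 * c.2 : ℕ) := by
    rw [hsum.tsum_prod,
      tsum_pnat_eq_tsum_succ (f := fun d ↦ ∑' c : ℕ+, χ₃ d * q ^ (d * c : ℕ))]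
    refine tsum_congr fun n ↦ ?_
    rw [tsum_mul_left, tsum_pnat_eq_tsum_succ (f := fun c ↦ q ^ ((n + 1) * c))]
    simp only [pow_mul, pow_succ (q ^ (n + 1))]
    rw [tsum_mul_right, tsum_geometric_of_norm_lt_one (norm_pow_succ_lt_one hq n), lambert,
      div_eq_inv_mul]
  have hlhs : ∑' c : ℕ+ × ℕ+, χ₃ c.1 * q ^ (c.1 * c.2 : ℕ) =
      ∑' n : ℕ+, (∑ d ∈ (n : ℕ).divisors, χ₃ d) * q ^ (n : ℕ) := by
    have hs : Summable fun c : (n : ℕ+) × (n : ℕ).divisorsAntidiagonal ↦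
        χ₃ (sigmaAntidiagonalEquivProd c).1 * q ^ ((sigmaAntidiagonalEquivProd c).1 *
          (sigmaAntidiagonalEquivProd c).2 : ℕ) :=
      sigmaAntidiagonalEquivProd.summable_iff.2 hsum
    rw [← sigmaAntidiagonalEquivProd.tsum_eq, hs.tsum_sigma]
    refine tsum_congr fun n ↦ ?_
    rw [tsum_fintype, Finset.sum_mul, ← Nat.sum_divisorsAntidiagonal (fun d _ ↦ χ₃ d * q ^ (n : ℕ)),
      ← Finset.sum_coe_sort (n : ℕ).divisorsAntidiagonal]
    refine Finset.sum_congr rfl fun p _ ↦ ?_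
    change χ₃ p.1.1 * q ^ (p.1.1 * p.1.2) = _
    rw [(Nat.mem_divisorsAntidiagonal.1 p.2).1]
  rw [hrhs, hlhs, tsum_pnat_eq_tsum_succ (f := fun n ↦ (∑ d ∈ n.divisors, χ₃ d) * q ^ n)]

lemma tsum_threeDvd_mul (F : ℕ → ℂ) :
    ∑' n, threeDvd (n + 1) * F n = ∑' k, F (3 * k + 2) := by
  have hinj : Function.Injective fun k : ℕ ↦ 3 * k + 2 := fun a b h ↦ by
    simp only at h
    omega
  rw [← hinj.tsum_eq]
  · refine tsum_congr fun k ↦ ?_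
    rw [threeDvd, if_pos ⟨k + 1, by ring⟩, one_mul]
  · intro n hn
    have : 3 ∣ n + 1 := by
      by_contra h
      simp [threeDvd, h] at hn
    exact ⟨n / 3, by simp only; omega⟩

lemma χ₃_succ_eq (n : ℕ) :
    χ₃ (n + 1) = 3 - 2 * (n + 1) + 6 * (n / 3 : ℕ) +
      threeDvd (n + 1) * (6 - 3 * (n + 1) + 3 * n) := by
  obtain ⟨k, rfl | rfl | rfl⟩ : ∃ k, n = 3 * k ∨ n = 3 * k + 1 ∨ n = 3 * k + 2 :=
    ⟨n / 3, by omega⟩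
  · have h1 : (3 * k + 1) % 3 = 1 := by omega
    have h2 : 3 * k / 3 = k := by omega
    have h3 : ¬ 3 ∣ 3 * k + 1 := by omega
    simp only [χ₃, threeDvd, h1, h2, h3, if_true, if_false]
    push_cast
    ring
  · have h1 : (3 * k + 1 + 1) % 3 = 2 := by omega
    have h2 : (3 * k + 1) / 3 = k := by omega
    have h3 : ¬ 3 ∣ 3 * k + 1 + 1 := by omega
    simp [χ₃, threeDvd, h1, h2, h3]
    ring
  · have h1 : (3 * k + 2 + 1) % 3 = 0 := by omega
    have h2 : (3 * k + 2) / 3 = k := by omega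
    have h3 : 3 ∣ 3 * k + 2 + 1 := by omega
    simp [χ₃, threeDvd, h1, h2, h3]
    ring

theorem sq_tsum_χ₃_add (hq : ‖q‖ < 1) :
    (1 / 6 + ∑' n : ℕ, (∑ d ∈ (n + 1).divisors, χ₃ d) * q ^ (n + 1)) ^ 2 =
      1 / 36 + (∑' n : ℕ, sigmaC 1 (n + 1) * q ^ (n + 1)) / 3 -
        ∑' n : ℕ, sigmaC 1 (n + 1) * (q ^ 3) ^ (n + 1) := by
  have hq3 : ‖q ^ 3‖ < 1 := norm_pow_succ_lt_one hq 2
  have hcast (n : ℕ) : ‖((n : ℂ) + 1)‖ ≤ n + 1 := by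
    exact_mod_cast (norm_natCast (n + 1) (α := ℂ)).le
  have hlam {q : ℂ} (hq : ‖q‖ < 1) : Summable fun n : ℕ ↦ lambert q n + lambert q n ^ 2 :=
    (summable_lambert hq).add (by simpa using summable_mul_lambert_sq hq (c := 1) (by simp))
  have hS1 {q : ℂ} (hq : ‖q‖ < 1) : Summable fun n : ℕ ↦ (n + 1 : ℂ) * lambert q n :=
    summable_mul_lambert hq hcast
  have hdiv : Summable fun n : ℕ ↦ ((n / 3 : ℕ) : ℂ) * lambert q n :=
    summable_mul_lambert hq fun n ↦ by
      rw [norm_natCast]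
      exact_mod_cast (Nat.div_le_self n 3).trans n.le_succ
  have hsq : Summable fun n ↦ lambert q n ^ 2 := by
    simpa using summable_mul_lambert_sq hq (c := 1) (by simp)
  have hχ : Summable fun n ↦ χ₃ (n + 1) * lambert q n :=
    summable_bounded_mul_lambert hq fun n ↦ norm_χ₃_le (n + 1)
  have hg : Summable fun n ↦ threeDvd (n + 1) * (2 * lambert q n ^ 2 - n * lambert q n) := by
    have h1 := (summable_mul_lambert_sq hq fun n ↦ norm_threeDvd_le (n + 1)).mul_left 2
    have h2 : Summable fun n : ℕ ↦ threeDvd (n + 1) * n * lambert q n :=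
      summable_mul_lambert hq fun n ↦ by
        rw [norm_mul, norm_natCast]
        exact (mul_le_of_le_one_left n.cast_nonneg (norm_threeDvd_le _)).trans (by simp)
    exact (h1.sub h2).congr fun n ↦ by ring
  have hl : Summable fun n : ℕ ↦ threeDvd (n + 1) *
      (2 * (lambert q n + lambert q n ^ 2) - (n + 1) * lambert q n) :=
    (hg.add (summable_bounded_mul_lambert hq fun n ↦ norm_threeDvd_le (n + 1))).congr
      fun n ↦ by ring
  have hlevel : ∑' n : ℕ, threeDvd (n + 1) *
      (2 * (lambert q n + lambert q n ^ 2) - (n + 1) * lambert q n) =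
      -∑' n : ℕ, sigmaC 1 (n + 1) * (q ^ 3) ^ (n + 1) := by
    have hlam3 (k : ℕ) : lambert q (3 * k + 2) = lambert (q ^ 3) k := by
      rw [lambert, lambert, ← pow_mul]
      ring_nf
    rw [tsum_threeDvd_mul]
    simp only [hlam3]
    trans ∑' k : ℕ, (2 * (lambert (q ^ 3) k + lambert (q ^ 3) k ^ 2) -
      3 * ((k + 1) * lambert (q ^ 3) k))
    · refine tsum_congr fun k ↦ ?_
      push_cast
      ring
    · rw [((hlam hq3).mul_left 2).tsum_sub ((hS1 hq3).mul_left 3), tsum_mul_left, tsum_mul_left,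
        tsum_lambert_add_sq hq3, tsum_succ_mul_lambert hq3]
      ring
  have hmain : ∑' n, lambert q n ^ 2 + ∑' n : ℕ, (threeDvd (n + 1) *
        (2 * lambert q n ^ 2 - n * lambert q n)) - 2 * ∑' n : ℕ, (n / 3 : ℕ) * lambert q n +
        (∑' n, χ₃ (n + 1) * lambert q n) / 3 =
      ∑' n : ℕ, (lambert q n + lambert q n ^ 2) - 2 / 3 * ∑' n : ℕ, (n + 1 : ℂ) * lambert q n +
        ∑' n : ℕ, threeDvd (n + 1) *
          (2 * (lambert q n + lambert q n ^ 2) - (n + 1) * lambert q n) := by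
    rw [← tsum_mul_left, ← tsum_mul_left, ← tsum_div_const, ← hsq.tsum_add hg,
      ← (hsq.add hg).tsum_sub (hdiv.mul_left 2),
      ← ((hsq.add hg).sub (hdiv.mul_left 2)).tsum_add (hχ.div_const 3),
      ← (hlam hq).tsum_sub ((hS1 hq).mul_left (2 / 3)),
      ← ((hlam hq).sub ((hS1 hq).mul_left (2 / 3))).tsum_add hl]
    refine tsum_congr fun n ↦ ?_
    linear_combination (lambert q n / 3) * χ₃_succ_eq n
  rw [tsum_lambert_add_sq hq, tsum_succ_mul_lambert hq, hlevel,
    ← sq_tsum_χ₃_mul_lambert hq] at hmain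
  rw [tsum_sum_divisors_χ₃ hq]
  linear_combination hmain

end Lambert

theorem E₁₃_sq {τ : ℂ} (hτ : 0 < τ.im) : E₁₃ τ ^ 2 = E₃₂ τ / 36 := by
  have h := sq_tsum_χ₃_add (norm_qq_lt_one hτ)
  simp only [E₁₃, E₃₂, E₂, qq_three_mul]
  rw [h]
  ring

theorem stmt12 (τ : ℂ) (hτ : 0 < τ.im) :
    E₃₂ τ ^ 4 - E₃₄ τ ^ 2 = 3888 * (η τ * η (3 * τ)) ^ 6 * E₁₃ τ ^ 2 := by
  rw [E₃₂_pow_four_sub_E₃₄_sq hτ, E₁₃_sq hτ]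
  ring
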